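/- arXiv:2410.20694 — 2 statements merged into one kernel-verified Lean document; each statement's English description precedes it below -/
import Mathlib

section
/- Let n ≥ 1, let K ⊂ ℝⁿ be a convex body and let ν ∈ (0, |K|]. Then there exists a constant C = C(ν, K) > 0 such that for every convex body P ⊆ K with |P| ≥ ν and every integer k ≥ 1, one has |#(P ∩ ℤⁿ/k) − |P|·kⁿ| ≤ C·k^{n−1}. -/
open MeasureTheory Set

/-- The rescaled lattice `ℤⁿ/k` inside `ℝⁿ`. -/
def lpts (n k : ℕ) : Set (EuclideanSpace ℝ (Fin n)) :=
  {x | ∀ i, ∃ m : ℤ, (k : ℝ) * x i = (m : ℝ)}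

open Classical in
theorem oneD (N : ℕ) (A : Set ℝ) (hc : IsCompact A) (hv : Convex ℝ A)
    (hb : ∀ x ∈ A, |x| ≤ N) :
    |∑ m ∈ Finset.Icc (-(N:ℤ)) N, A.indicator (fun _ => (1:ℝ)) (m:ℝ) - volume.real A| ≤ 1 := by
  rcases A.eq_empty_or_nonempty with rfl | hne
  · simp
  have hA := eq_Icc_of_connected_compact ⟨hne, hv.isPreconnected⟩ hc
  set a := sInf A
  set b := sSup A
  have hab : a ≤ b := by
    rw [hA] at hne; exact nonempty_Icc.1 hne
  have ha := hb a (by rw [hA]; exact ⟨le_rfl, hab⟩)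
  have hbb := hb b (by rw [hA]; exact ⟨hab, le_rfl⟩)
  rw [abs_le] at ha hbb
  have hs : ∑ m ∈ Finset.Icc (-(N:ℤ)) N, A.indicator (fun _ => (1:ℝ)) (m:ℝ)
      = ((Finset.Icc ⌈a⌉ ⌊b⌋).card : ℝ) := by
    classical
    simp only [indicator_apply]
    rw [Finset.sum_ite, Finset.sum_const_zero, add_zero, Finset.sum_const, nsmul_eq_mul, mul_one]
    congr 2
    ext m
    simp only [Finset.mem_filter, Finset.mem_Icc]
    rw [hA, mem_Icc, Int.ceil_le, Int.le_floor]
    constructor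
    · exact fun h => h.2
    · intro h
      refine ⟨⟨?_, ?_⟩, h⟩
      · have : ((-(N:ℤ) : ℤ):ℝ) ≤ m := by push_cast; linarith
        exact_mod_cast this
      · have : (m:ℝ) ≤ ((N:ℤ) : ℝ) := by push_cast; linarith
        exact_mod_cast this
  rw [hs, hA, Real.volume_real_Icc_of_le hab, Int.card_Icc]
  have h1 := Int.ceil_lt_add_one a
  have h2 := Int.lt_floor_add_one b
  have h3 := Int.le_ceil a
  have h4 := Int.floor_le b
  have h5 : 0 ≤ ⌊b⌋ + 1 - ⌈a⌉ := by
    have : (⌈a⌉:ℝ) < ((⌊b⌋ + 2 : ℤ) : ℝ) := by push_cast; linarith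
    have : ⌈a⌉ < ⌊b⌋ + 2 := by exact_mod_cast this
    omega
  have h6 : (((⌊b⌋ + 1 - ⌈a⌉).toNat : ℕ) : ℝ) = ⌊b⌋ + 1 - ⌈a⌉ := by
    have : (((⌊b⌋ + 1 - ⌈a⌉).toNat : ℕ) : ℤ) = ⌊b⌋ + 1 - ⌈a⌉ := Int.toNat_of_nonneg h5
    exact_mod_cast congrArg (Int.cast : ℤ → ℝ) this
  rw [h6, abs_le]
  constructor <;> linarith

noncomputable def zbox (n N : ℕ) : Finset (Fin n → ℤ) := Fintype.piFinset fun _ => Finset.Icc (-(N:ℤ)) N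

theorem zbox_card (n N : ℕ) : ((zbox n N).card : ℝ) = (2 * N + 1) ^ n := by
  have : ((N:ℤ) + 1 + N).toNat = 2 * N + 1 := by omega
  simp [zbox, this]

theorem zbox_sum (n N : ℕ) (f : (Fin (n+1) → ℤ) → ℝ) :
    ∑ z ∈ zbox (n+1) N, f z =
      ∑ z ∈ zbox n N, ∑ m ∈ Finset.Icc (-(N:ℤ)) N, f (Fin.cons m z) := by
  rw [← Finset.sum_product']
  symm
  refine Finset.sum_bij' (fun p _ => Fin.cons p.2 p.1) (fun z _ => (Fin.tail z, z 0)) ?_ ?_ ?_ ?_ ?_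
  · intro p hp
    simp only [Finset.mem_product, zbox, Fintype.mem_piFinset] at hp ⊢
    intro i
    refine Fin.cases ?_ ?_ i
    · simpa using hp.2
    · intro j; simpa using hp.1 j
  · intro z hz
    simp only [Finset.mem_product, zbox, Fintype.mem_piFinset] at hz ⊢
    exact ⟨fun i => hz _, hz 0⟩
  · intro p _; simp
  · intro z _; simp
  · intro p _; rfl

def rc {n : ℕ} (z : Fin n → ℤ) : Fin n → ℝ := fun i => z i

theorem rc_cons {n : ℕ} (m : ℤ) (z : Fin n → ℤ) :
    rc (Fin.cons m z : Fin (n+1) → ℤ) = (Fin.cons (m:ℝ) (rc z) : Fin (n+1) → ℝ) := by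
  funext i
  refine Fin.cases ?_ ?_ i
  · simp [rc]
  · intro j; simp [rc]

theorem fub (n : ℕ) (P : Set (Fin (n+1) → ℝ)) (hP : MeasurableSet P) :
    volume P = ∫⁻ t : ℝ, volume {y : Fin n → ℝ | (Fin.cons t y : Fin (n+1) → ℝ) ∈ P} := by
  have h := (volume_preserving_piFinSuccAbove (fun _ : Fin (n+1) => ℝ) 0).symm
  rw [← h.measure_preimage_equiv P]
  rw [Measure.volume_eq_prod, Measure.prod_apply ((MeasurableEquiv.measurable _) hP)]
  congr 1
  funext t
  congr 1
  ext y
  simp [MeasurableEquiv.piFinSuccAbove_symm_apply, Fin.insertNthEquiv, Fin.insertNth_zero']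

theorem cons_cont1 (n : ℕ) (t : ℝ) :
    Continuous (fun y : Fin n → ℝ => (Fin.cons t y : Fin (n+1) → ℝ)) := by
  refine continuous_pi fun i => ?_
  refine Fin.cases ?_ ?_ i
  · simpa using continuous_const
  · intro j; simpa using continuous_apply j

theorem cons_cont2 (n : ℕ) (y : Fin n → ℝ) :
    Continuous (fun t : ℝ => (Fin.cons t y : Fin (n+1) → ℝ)) := by
  refine continuous_pi fun i => ?_
  refine Fin.cases ?_ ?_ i
  · simpa using continuous_id'
  · intro j; simpa using continuous_const

theorem cons_cc {n : ℕ} (a b s t : ℝ) (x y : Fin n → ℝ) :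
    (Fin.cons (a * s + b * t) (a • x + b • y) : Fin (n+1) → ℝ)
      = a • (Fin.cons s x : Fin (n+1) → ℝ) + b • (Fin.cons t y : Fin (n+1) → ℝ) := by
  funext i
  refine Fin.cases ?_ ?_ i
  · simp
  · intro j; simp

theorem main (n N : ℕ) : ∀ (P : Set (Fin n → ℝ)), IsCompact P → Convex ℝ P →
    (∀ x ∈ P, ∀ i, |x i| ≤ N) →
    |∑ z ∈ zbox n N, P.indicator (fun _ => (1:ℝ)) (rc z) - volume.real P|
      ≤ n * (2 * N + 1) ^ (n - 1) := by
  induction n with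
  | zero =>
    intro P hc hv hb
    rcases Set.eq_empty_or_nonempty P with rfl | ⟨x, hx⟩
    · simp
    · have hP : P = Set.univ := by
        ext y; simp [Subsingleton.elim y x, hx]
      subst hP
      simp [zbox, Measure.real, volume_pi, Measure.pi_of_empty]
  | succ n ih =>
    intro P hc hv hb
    set S : ℝ → Set (Fin n → ℝ) := fun t => {y | (Fin.cons t y : Fin (n+1) → ℝ) ∈ P} with hS
    set T : (Fin n → ℝ) → Set ℝ := fun y => {t | (Fin.cons t y : Fin (n+1) → ℝ) ∈ P} with hT
    have hSb : ∀ t, ∀ y ∈ S t, ∀ i, |y i| ≤ N := by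
      intro t y hy i
      simpa using hb _ hy i.succ
    have hTb : ∀ y, ∀ t ∈ T y, |t| ≤ N := by
      intro y t ht
      simpa using hb _ ht 0
    have hSc : ∀ t, IsCompact (S t) := by
      intro t
      refine Metric.isCompact_of_isClosed_isBounded (hc.isClosed.preimage (cons_cont1 n t)) ?_
      refine (Metric.isBounded_closedBall (x := (0 : Fin n → ℝ)) (r := N)).subset ?_
      intro y hy
      rw [mem_closedBall_zero_iff, pi_norm_le_iff_of_nonneg (by positivity)]
      exact hSb t y hy
    have hTc : ∀ y, IsCompact (T y) := by
      intro y
      refine Metric.isCompact_of_isClosed_isBounded (hc.isClosed.preimage (cons_cont2 n y)) ?_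
      refine (Metric.isBounded_closedBall (x := (0 : ℝ)) (r := N)).subset ?_
      intro t ht
      rw [mem_closedBall_zero_iff]
      exact hTb y t ht
    have hSv : ∀ t, Convex ℝ (S t) := by
      intro t x hx y hy a b ha hb' hab
      have := hv hx hy ha hb' hab
      rw [← cons_cc, ← add_mul, hab, one_mul] at this
      exact this
    have hTv : ∀ y, Convex ℝ (T y) := by
      intro y s hs t ht a b ha hb' hab
      have := hv hs ht ha hb' hab
      rw [← cons_cc, ← add_smul, hab, one_smul] at this
      exact this
    have hSempty : ∀ t, t ∉ Icc (-(N:ℝ)) N → S t = ∅ := by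
      intro t ht
      by_contra h
      obtain ⟨y, hy⟩ := Set.nonempty_iff_ne_empty.2 h
      exact ht (abs_le.1 (hTb y t hy))
    have hPfin : volume P < ⊤ := hc.measure_lt_top
    have hfub := fub n P hc.measurableSet
    have hmeas : Measurable fun t => volume (S t) := by
      have h := (MeasurableEquiv.piFinSuccAbove (fun _ : Fin (n+1) => ℝ) 0).symm.measurable
        hc.measurableSet
      have h2 := measurable_measure_prodMk_left (ν := (volume : Measure (Fin n → ℝ))) h
      convert h2 using 3 with t
      ext y
      simp [hS, MeasurableEquiv.piFinSuccAbove_symm_apply, Fin.insertNthEquiv, Fin.insertNth_zero']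
    have hI1 : Integrable (fun t => volume.real (S t)) := by
      refine integrable_toReal_of_lintegral_ne_top hmeas.aemeasurable ?_
      rw [← hfub]; exact hPfin.ne
    have hvol : ∫ t, volume.real (S t) = volume.real P := by
      unfold Measure.real
      rw [integral_toReal hmeas.aemeasurable (Filter.Eventually.of_forall fun t => (hSc t).measure_lt_top),
        ← hfub]
    have hind : ∀ t y, (S t).indicator (fun _ => (1:ℝ)) y = (T y).indicator (1 : ℝ → ℝ) t := by
      intro t y
      rfl
    have hI2 : ∀ y, Integrable (fun t => (S t).indicator (fun _ => (1:ℝ)) y) := by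
      intro y
      simp only [hind]
      exact (integrable_indicator_iff (hTc y).measurableSet).2
        (integrableOn_const (hTc y).measure_lt_top.ne)
    have hJ : ∀ y, ∫ t, (S t).indicator (fun _ => (1:ℝ)) y = volume.real (T y) := by
      intro y
      simp only [hind]
      exact integral_indicator_one (hTc y).measurableSet
    -- integrate the induction hypothesis
    have hA : |∑ z ∈ zbox n N, volume.real (T (rc z)) - volume.real P|
        ≤ (n * (2 * N + 1) ^ (n - 1)) * (2 * N) := by
      have e : ∑ z ∈ zbox n N, volume.real (T (rc z)) - volume.real P
          = ∫ t in Icc (-(N:ℝ)) N, (∑ z ∈ zbox n N, (S t).indicator (fun _ => (1:ℝ)) (rc z)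
            - volume.real (S t)) := by
        rw [setIntegral_eq_integral_of_forall_compl_eq_zero]
        · rw [integral_sub (integrable_finsetSum _ fun z _ => hI2 _) hI1,
            integral_finsetSum _ fun z _ => hI2 _, hvol]
          simp only [hJ]
        · intro t ht
          rw [hSempty t ht]; simp
      rw [e, ← Real.norm_eq_abs]
      refine (norm_setIntegral_le_of_norm_le_const (by simp) (C := n * (2 * N + 1) ^ (n - 1)) ?_).trans ?_
      · intro t _
        exact ih (S t) (hSc t) (hSv t) (hSb t)
      · rw [Real.volume_real_Icc_of_le (by linarith [Nat.cast_nonneg (α := ℝ) N])]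
        apply le_of_eq; ring
    have hB : |∑ z ∈ zbox (n+1) N, P.indicator (fun _ => (1:ℝ)) (rc z)
        - ∑ z ∈ zbox n N, volume.real (T (rc z))| ≤ (2 * N + 1) ^ n := by
      rw [zbox_sum, ← Finset.sum_sub_distrib]
      refine (Finset.abs_sum_le_sum_abs _ _).trans ?_
      rw [← zbox_card, Finset.card_eq_sum_ones]
      push_cast
      refine Finset.sum_le_sum fun z _ => ?_
      have := oneD N (T (rc z)) (hTc _) (hTv _) (hTb _)
      have e2 : ∀ m : ℤ, P.indicator (fun _ => (1:ℝ)) (rc (Fin.cons m z : Fin (n+1) → ℤ))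
          = (T (rc z)).indicator (fun _ => (1:ℝ)) (m:ℝ) := by
        intro m
        rw [rc_cons]
        rfl
      simp only [e2]
      exact this
    have hE : (n * (2 * N + 1) ^ (n - 1)) * (2 * N) ≤ (n:ℝ) * (2 * N + 1) ^ n := by
      rcases n with _ | n
      · simp
      · rw [Nat.add_sub_cancel, pow_succ, mul_assoc]
        gcongr
        linarith
    have := abs_add_le (∑ z ∈ zbox (n+1) N, P.indicator (fun _ => (1:ℝ)) (rc z)
        - ∑ z ∈ zbox n N, volume.real (T (rc z))) (∑ z ∈ zbox n N, volume.real (T (rc z)) - volume.real P)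
    rw [sub_add_sub_cancel] at this
    rw [Nat.add_sub_cancel]
    push_cast
    linarith

open scoped Pointwise in
theorem stmt0 (n : ℕ) (hn : 1 ≤ n) (K : Set (EuclideanSpace ℝ (Fin n)))
    (hKne : K.Nonempty) (hKcp : IsCompact K) (hKcv : Convex ℝ K)
    (ν : ℝ) (hν : 0 < ν) (hνK : ν ≤ (volume K).toReal) :
    ∃ C : ℝ, 0 < C ∧ ∀ P : Set (EuclideanSpace ℝ (Fin n)),
      P ⊆ K → P.Nonempty → IsCompact P → Convex ℝ P → ν ≤ (volume P).toReal →
      ∀ k : ℕ, 1 ≤ k →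
        |((P ∩ lpts n k).ncard : ℝ) - (volume P).toReal * (k : ℝ) ^ n|
          ≤ C * (k : ℝ) ^ (n - 1) := by
  obtain ⟨R0, hR0⟩ := hKcp.isBounded.exists_norm_le
  obtain ⟨R, hR⟩ := exists_nat_ge R0
  refine ⟨n * (2 * R + 1) ^ (n - 1), by positivity, ?_⟩
  intro P hPK _ hPc hPv _ k hk
  have hk0 : (0:ℝ) < k := by exact_mod_cast hk
  -- the scaled body
  set L : EuclideanSpace ℝ (Fin n) → (Fin n → ℝ) := fun x => (k:ℝ) • WithLp.ofLp x with hL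
  have hLinj : Function.Injective L := by
    intro x y h
    exact WithLp.ofLp_injective 2 (smul_right_injective _ hk0.ne' h)
  have hLc : Continuous L := by
    have := PiLp.continuous_ofLp 2 (fun _ : Fin n => ℝ)
    fun_prop
  set Q := L '' P with hQ
  have hQc : IsCompact Q := hPc.image hLc
  have hQv : Convex ℝ Q := by
    rintro _ ⟨x, hx, rfl⟩ _ ⟨y, hy, rfl⟩ a b ha hb hab
    refine ⟨a • x + b • y, hPv hx hy ha hb hab, ?_⟩
    funext i
    simp [hL]; ring
  have hQb : ∀ x ∈ Q, ∀ i, |x i| ≤ ((k * R : ℕ) : ℝ) := by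
    rintro _ ⟨x, hx, rfl⟩ i
    have h1 : ‖x i‖ ≤ ‖x‖ := PiLp.norm_apply_le x i
    have h2 := hR0 x (hPK hx)
    simp only [hL, Pi.smul_apply, smul_eq_mul, abs_mul, Nat.abs_cast]
    push_cast
    gcongr
    rw [← Real.norm_eq_abs]; linarith
  have hm := main n (k * R) Q hQc hQv hQb
  have hvol : volume.real Q = (volume P).toReal * (k:ℝ)^n := by
    have : Q = (k:ℝ) • (WithLp.toLp 2 ⁻¹' P : Set (Fin n → ℝ)) := by
      ext y
      constructor
      · rintro ⟨x, hx, rfl⟩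
        exact ⟨WithLp.ofLp x, by simpa using hx, rfl⟩
      · rintro ⟨x, hx, rfl⟩
        exact ⟨WithLp.toLp 2 x, hx, rfl⟩
    rw [this, Measure.real, Measure.addHaar_smul, ENNReal.toReal_mul,
      (PiLp.volume_preserving_toLp (Fin n)).measure_preimage hPc.measurableSet.nullMeasurableSet]
    simp [mul_comm]
  have hcard : ∑ z ∈ zbox n (k * R), Q.indicator (fun _ => (1:ℝ)) (rc z)
      = ((P ∩ lpts n k).ncard : ℝ) := by
    classical
    simp only [indicator_apply]
    rw [Finset.sum_ite, Finset.sum_const_zero, add_zero, Finset.sum_const, nsmul_eq_mul, mul_one]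
    congr 1
    have hrc : Function.Injective (rc : (Fin n → ℤ) → _) := by
      intro x y h
      funext i
      have := congrFun h i
      simpa [rc] using this
    rw [← Set.ncard_image_of_injective _ hLinj, ← Set.ncard_coe_finset,
      ← Set.ncard_image_of_injective _ hrc]
    congr 1
    ext y
    constructor
    · rintro ⟨z, hz, rfl⟩
      simp only [Finset.coe_filter, mem_ofPred_eq] at hz
      obtain ⟨x, hx, hxz⟩ := hz.2
      refine ⟨x, ⟨hx, fun i => ⟨z i, ?_⟩⟩, hxz⟩
      exact congrFun hxz i
    · rintro ⟨x, ⟨hx, hl⟩, rfl⟩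
      choose z hz using hl
      have e : rc z = L x := by funext i; exact (hz i).symm
      refine ⟨z, ?_, e⟩
      simp only [Finset.coe_filter, mem_ofPred_eq]
      refine ⟨?_, ?_⟩
      · rw [zbox, Fintype.mem_piFinset]
        intro i
        have h := hQb _ (mem_image_of_mem L hx) i
        rw [← e, abs_le] at h
        rw [Finset.mem_Icc]
        simp only [rc] at h
        exact_mod_cast h
      · rw [e]; exact mem_image_of_mem L hx
  rw [hcard, hvol] at hm
  refine hm.trans ?_
  rw [mul_assoc, ← mul_pow]
  have : (1:ℝ) ≤ k := by exact_mod_cast hk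
  gcongr
  push_cast
  nlinarith
end

section
/- Let n ≥ 1 and let K ⊂ ℝⁿ be a convex body. Then there exists a constant C = C(K) > 0 such that for every convex body P ⊆ K, every nonnegative concave function G defined on P, and every integer k ≥ 1, one has (1/kⁿ) · Σ_{x ∈ P ∩ ℤⁿ/k} G(x) ≤ ∫_P G(x) dx + (C/k) · sup_P G. -/
open MeasureTheory Set

lemma aux_oneD (B : Set ℝ) (hB : B.OrdConnected) (r : ℝ) (hr : B ⊆ Icc (-r) r) :
    ∑' m : ℤ, B.indicator (1 : ℝ → ENNReal) (m : ℝ) ≤ volume B + 1 := by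
  classical
  have hfin : {m : ℤ | (m : ℝ) ∈ B}.Finite := by
    apply (Set.finite_Icc (-⌈r⌉) ⌈r⌉).subset
    intro m hm
    have h := hr hm
    have h1 := Int.le_ceil r
    constructor
    · have : (-(⌈r⌉ : ℝ)) ≤ m := by linarith [h.1]
      exact_mod_cast this
    · have : (m : ℝ) ≤ ⌈r⌉ := by linarith [h.2]
      exact_mod_cast this
  rw [tsum_eq_sum (s := hfin.toFinset)]
  swap
  · intro b hb
    have : (b : ℝ) ∉ B := by simpa using hb
    simp [this]
  have h1 : ∑ m ∈ hfin.toFinset, B.indicator (1 : ℝ → ENNReal) (m : ℝ) = hfin.toFinset.card := by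
    rw [Finset.sum_congr rfl (g := fun _ => (1 : ENNReal))]
    · simp
    · intro x hx
      have : (x : ℝ) ∈ B := by simpa using hx
      simp [this]
  rw [h1]
  rcases hfin.toFinset.eq_empty_or_nonempty with he | hne
  · simp [he]
  set a := hfin.toFinset.min' hne with ha
  set b := hfin.toFinset.max' hne with hb
  have haB : (a : ℝ) ∈ B := by
    have := hfin.toFinset.min'_mem hne
    simpa using this
  have hbB : (b : ℝ) ∈ B := by
    have := hfin.toFinset.max'_mem hne
    simpa using this
  have hab : a ≤ b := Finset.min'_le_max' _ hne
  have hsub : hfin.toFinset ⊆ Finset.Icc a b := by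
    intro x hx
    rw [Finset.mem_Icc]
    exact ⟨Finset.min'_le _ _ hx, Finset.le_max' _ _ hx⟩
  have hc := Finset.card_le_card hsub
  rw [Int.card_Icc] at hc
  have hv : volume (Icc (a : ℝ) b) ≤ volume B := measure_mono (hB.out haB hbB)
  rw [Real.volume_Icc] at hv
  refine le_trans ?_ (add_le_add_left hv 1)
  have habR : (a : ℝ) ≤ b := by exact_mod_cast hab
  rw [← ENNReal.ofReal_one, ← ENNReal.ofReal_add (by linarith) (by norm_num),
    ← ENNReal.ofReal_natCast]
  apply ENNReal.ofReal_le_ofReal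
  have : (hfin.toFinset.card : ℤ) ≤ b - a + 1 := by omega
  exact_mod_cast this

lemma aux_key (r : ℝ) (hr : 0 ≤ r) (n : ℕ) : ∀ A : Set (Fin n → ℝ), MeasurableSet A →
    Convex ℝ A → (A ⊆ Set.pi univ (fun _ => Icc (-r) r)) →
    ∑' z : Fin n → ℤ, A.indicator (1 : (Fin n → ℝ) → ENNReal) (fun i => (z i : ℝ))
      ≤ volume A + n * ENNReal.ofReal (2 * r + 1) ^ (n - 1) := by
  induction n with
  | zero =>
    intro A hA hcv hAr
    rw [tsum_eq_single default (by intro b hb; exact absurd (Subsingleton.elim _ _) hb)]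
    rcases A.eq_empty_or_nonempty with h | h
    · simp [h]
    · have : A = univ := by
        obtain ⟨x, hx⟩ := h
        ext y; simp [Subsingleton.elim y x, hx]
      rw [this, volume_pi, Measure.pi_univ]
      simp
  | succ n ih =>
    intro A hA hcv hAr
    set s := ENNReal.ofReal (2 * r + 1) with hs
    have hcons : Measurable (fun p : ℝ × (Fin n → ℝ) => (Fin.cons p.1 p.2 : Fin (n+1) → ℝ)) := by
      rw [measurable_pi_iff]
      intro i
      refine Fin.cases ?_ (fun j => ?_) i
      · simpa using measurable_fst
      · simp only [Fin.cons_succ]; fun_prop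
    have hmem : ∀ x (y : Fin n → ℝ), (Fin.cons x y : Fin (n+1) → ℝ) ∈ A →
        x ∈ Icc (-r) r ∧ y ∈ Set.pi univ (fun _ : Fin n => Icc (-r) r) := by
      intro x y h
      have h := hAr h
      refine ⟨by simpa using h 0 (mem_univ _), fun i _ => by simpa using h i.succ (mem_univ _)⟩
    have hAx : ∀ x, MeasurableSet {y : Fin n → ℝ | (Fin.cons x y : Fin (n+1) → ℝ) ∈ A} := fun x =>
      (hcons.comp (measurable_prodMk_left (x := x))) hA
    have hAxc : ∀ x, Convex ℝ {y : Fin n → ℝ | (Fin.cons x y : Fin (n+1) → ℝ) ∈ A} := by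
      intro x y hy z hz a b ha hb hab
      have := hcv hy hz ha hb hab
      simp only [mem_ofPred_eq]
      convert this using 1
      ext i
      refine Fin.cases ?_ (fun j => ?_) i
      · simp [← add_mul, hab]
      · simp
    have hAyc : ∀ y, Convex ℝ {x : ℝ | (Fin.cons x y : Fin (n+1) → ℝ) ∈ A} := by
      intro y x hy z hz a b ha hb hab
      have := hcv hy hz ha hb hab
      simp only [mem_ofPred_eq]
      convert this using 1
      ext i
      refine Fin.cases ?_ (fun j => ?_) i
      · simp
      · simp [← add_mul, hab]
    -- sum over lattice
    have e1 : ∑' z : Fin (n+1) → ℤ, A.indicator (1 : (Fin (n+1) → ℝ) → ENNReal) (fun i => (z i : ℝ))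
        = ∑' m : ℤ, ∑' z : Fin n → ℤ, {y : Fin n → ℝ | (Fin.cons (m : ℝ) y : Fin (n+1) → ℝ) ∈ A}.indicator
          (1 : (Fin n → ℝ) → ENNReal) (fun i => (z i : ℝ)) := by
      rw [← ENNReal.tsum_prod, ← (Fin.consEquiv (fun _ : Fin (n+1) => ℤ)).tsum_eq]
      congr 1
      ext p
      have : (fun i => (((Fin.consEquiv (fun _ : Fin (n+1) => ℤ)) p i : ℤ) : ℝ))
          = (Fin.cons (p.1 : ℝ) (fun i => (p.2 i : ℝ)) : Fin (n+1) → ℝ) := by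
        ext i
        refine Fin.cases ?_ (fun j => ?_) i <;> simp [Fin.consEquiv]
      rw [this]
      simp [Set.indicator]
    have e2 : volume A = ∫⁻ y : Fin n → ℝ, volume {x : ℝ | (Fin.cons x y : Fin (n+1) → ℝ) ∈ A} := by
      have hp := (volume_preserving_piFinSuccAbove (fun _ : Fin (n+1) => ℝ) 0).symm
      rw [← hp.measure_preimage hA.nullMeasurableSet]
      have : volume (α := ℝ × (Fin n → ℝ)) = (volume : Measure ℝ).prod (volume : Measure (Fin n → ℝ)) := rfl
      erw [this, Measure.prod_apply_symm (MeasurableEquiv.measurable _ hA)]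
      congr 1
      ext y
      congr 1
      ext x
      simp [MeasurableEquiv.piFinSuccAbove, Fin.insertNthEquiv]
    have e3 : ∑' m : ℤ, volume {y : Fin n → ℝ | (Fin.cons (m : ℝ) y : Fin (n+1) → ℝ) ∈ A}
        = ∫⁻ y : Fin n → ℝ, ∑' m : ℤ, {x : ℝ | (Fin.cons x y : Fin (n+1) → ℝ) ∈ A}.indicator 1 (m : ℝ) := by
      have hh : ∀ (m : ℤ) (y : Fin n → ℝ), {x : ℝ | (Fin.cons x y : Fin (n+1) → ℝ) ∈ A}.indicator (1 : ℝ → ENNReal) (m : ℝ)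
          = {y : Fin n → ℝ | (Fin.cons (m : ℝ) y : Fin (n+1) → ℝ) ∈ A}.indicator 1 y := by
        intro m y; simp [Set.indicator]
      simp_rw [hh]
      rw [lintegral_tsum]
      · congr 1; ext m
        rw [lintegral_indicator_one (hAx m)]
      · intro m
        exact (measurable_one.indicator (hAx m)).aemeasurable
    have hvol : volume (Icc (-r) r) + 1 = s := by
      rw [Real.volume_Icc, ← ENNReal.ofReal_one, ← ENNReal.ofReal_add (by linarith) (by norm_num), hs]
      congr 1; ring
    have hbox : volume (Set.pi univ (fun _ : Fin n => Icc (-r) r)) ≤ s ^ n := by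
      rw [volume_pi_pi]
      simp only [Finset.prod_const, Finset.card_univ, Fintype.card_fin]
      gcongr
      rw [← hvol]; exact le_self_add
    have hIcc : ∑' m : ℤ, (Icc (-r) r).indicator (1 : ℝ → ENNReal) (m : ℝ) ≤ s := by
      rw [← hvol]; exact aux_oneD _ ordConnected_Icc r le_rfl
    have hboxm : MeasurableSet (Set.pi univ (fun _ : Fin n => Icc (-r) r)) :=
      MeasurableSet.univ_pi (fun _ => measurableSet_Icc)
    calc _ = _ := e1
      _ ≤ ∑' m : ℤ, (volume {y : Fin n → ℝ | (Fin.cons (m : ℝ) y : Fin (n+1) → ℝ) ∈ A}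
            + (n * s ^ (n - 1)) * (Icc (-r) r).indicator (1 : ℝ → ENNReal) (m : ℝ)) := by
          apply ENNReal.tsum_le_tsum
          intro m
          by_cases hm : (m : ℝ) ∈ Icc (-r) r
          · simp only [indicator_of_mem hm, Pi.one_apply, mul_one]
            exact ih _ (hAx m) (hAxc m) (fun y hy => (hmem _ _ hy).2)
          · have : {y : Fin n → ℝ | (Fin.cons (m : ℝ) y : Fin (n+1) → ℝ) ∈ A} = ∅ := by
              ext y; simp only [mem_ofPred_eq, mem_empty_iff_false, iff_false]
              exact fun h => hm (hmem _ _ h).1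
            simp [this]
      _ = (∫⁻ y : Fin n → ℝ, ∑' m : ℤ, {x : ℝ | (Fin.cons x y : Fin (n+1) → ℝ) ∈ A}.indicator 1 (m : ℝ))
            + (n * s ^ (n - 1)) * ∑' m : ℤ, (Icc (-r) r).indicator (1 : ℝ → ENNReal) (m : ℝ) := by
          rw [ENNReal.tsum_add, e3, ENNReal.tsum_mul_left]
      _ ≤ (∫⁻ y : Fin n → ℝ, (volume {x : ℝ | (Fin.cons x y : Fin (n+1) → ℝ) ∈ A}
            + (Set.pi univ (fun _ : Fin n => Icc (-r) r)).indicator 1 y)) + (n * s ^ (n - 1)) * s := by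
          gcongr with y
          by_cases hy : y ∈ Set.pi univ (fun _ : Fin n => Icc (-r) r)
          · simp only [indicator_of_mem hy, Pi.one_apply]
            exact aux_oneD _ (hAyc y).ordConnected r (fun x hx => (hmem _ _ hx).1)
          · have : {x : ℝ | (Fin.cons x y : Fin (n+1) → ℝ) ∈ A} = ∅ := by
              ext x; simp only [mem_ofPred_eq, mem_empty_iff_false, iff_false]
              exact fun h => hy (hmem _ _ h).2
            simp [this]
      _ ≤ volume A + s ^ n + (n * s ^ (n - 1)) * s := by
          rw [lintegral_add_right _ (measurable_one.indicator hboxm), ← e2,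
            lintegral_indicator_one hboxm]
          gcongr
      _ = _ := by
          rw [add_assoc]
          congr 1
          rcases n with _ | n
          · simp
          · simp only [Nat.add_sub_cancel]
            push_cast
            ring

/-- boundedness -/
lemma aux_bdd {E : Type*} [NormedAddCommGroup E] [NormedSpace ℝ E] [FiniteDimensional ℝ E]
    (P : Set E) (hne : P.Nonempty) (hP : IsCompact P) (hcv : Convex ℝ P) (G : E → ℝ)
    (hG : ConcaveOn ℝ P G) (h0 : ∀ x ∈ P, 0 ≤ G x) : BddAbove (G '' P) := by
  obtain ⟨p, hp⟩ := Set.Nonempty.intrinsicInterior hcv hne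
  obtain ⟨q, hq, rfl⟩ := mem_intrinsicInterior.1 hp
  rw [mem_interior_iff_mem_nhds, Metric.mem_nhds_iff] at hq
  obtain ⟨δ, hδ, hball⟩ := hq
  obtain ⟨R, hR⟩ := hP.isBounded.exists_norm_le
  have hR0 : 0 ≤ R := by
    obtain ⟨x, hx⟩ := hne
    exact (norm_nonneg x).trans (hR x hx)
  have hqP : (q : E) ∈ P := hball (Metric.mem_ball_self hδ)
  set ε := δ / (2 * R + 1) with hε
  have hε0 : 0 < ε := by positivity
  refine ⟨(1 + ε) / ε * G q, ?_⟩
  rintro _ ⟨x, hx, rfl⟩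
  have hxs : x ∈ affineSpan ℝ P := subset_affineSpan ℝ P hx
  have hw : AffineMap.lineMap (q : E) x (-ε) ∈ affineSpan ℝ P :=
    AffineMap.lineMap_mem (-ε) q.2 hxs
  have hwv : AffineMap.lineMap (q : E) x (-ε) = (q : E) + ε • ((q : E) - x) := by
    rw [AffineMap.lineMap_apply_module']
    module
  have hwP : (q : E) + ε • ((q : E) - x) ∈ P := by
    rw [← hwv]
    have : (⟨_, hw⟩ : affineSpan ℝ P) ∈ Metric.ball q δ := by
      rw [Metric.mem_ball, Subtype.dist_eq]
      simp only [hwv]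
      rw [dist_eq_norm, add_sub_cancel_left, norm_smul, Real.norm_of_nonneg hε0.le]
      have h1 : ‖(q : E) - x‖ ≤ 2 * R := by
        have := norm_sub_le (q : E) x
        linarith [hR _ hqP, hR _ hx]
      calc ε * ‖(q : E) - x‖ ≤ ε * (2 * R) := by gcongr
        _ < ε * (2 * R + 1) := by gcongr; linarith
        _ = δ := by rw [hε]; field_simp
    exact hball this
  have hc := hG.2 hx hwP (show 0 ≤ ε / (1 + ε) by positivity) (show 0 ≤ 1 / (1 + ε) by positivity)
    (by field_simp; ring)
  have hcomb : (ε / (1 + ε)) • x + (1 / (1 + ε)) • ((q : E) + ε • ((q : E) - x)) = q := by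
    have h2 : (1 / (1 + ε)) * (1 + ε) = 1 := by field_simp
    have h3 : ε / (1 + ε) = (1 / (1 + ε)) * ε := by ring
    calc _ = ((1 / (1 + ε)) * (1 + ε)) • (q : E) := by rw [h3]; module
      _ = q := by rw [h2, one_smul]
  rw [hcomb] at hc
  have hw0 := h0 _ hwP
  simp only [smul_eq_mul] at hc
  have : ε / (1 + ε) * G x ≤ G q := by
    have : 0 ≤ 1 / (1 + ε) * G ((q : E) + ε • ((q : E) - x)) := by positivity
    linarith
  rw [div_mul_eq_mul_div, le_div_iff₀ hε0]
  rw [div_mul_eq_mul_div, div_le_iff₀ (by positivity)] at this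
  linarith

lemma aux_count (n k : ℕ) (R : ℝ) (hR : 0 ≤ R) (T : Finset (EuclideanSpace ℝ (Fin n)))
    (hT : ∀ x ∈ T, x ∈ lpts n k) (hk : 1 ≤ k) (hTR : ∀ x ∈ T, ‖x‖ ≤ R)
    (Q : Set (EuclideanSpace ℝ (Fin n))) (hQ : Convex ℝ Q) (hTQ : ∀ x ∈ T, x ∈ Q) :
    (T.card : ENNReal) ≤ ENNReal.ofReal ((k : ℝ) ^ n) * volume Q
      + n * ENNReal.ofReal (2 * (k * R) + 1) ^ (n - 1) := by
  classical
  have hkR : (0 : ℝ) < k := by exact_mod_cast hk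
  set H := convexHull ℝ (T : Set (EuclideanSpace ℝ (Fin n))) with hH
  have hHQ : H ⊆ Q := convexHull_min (fun x hx => hTQ x hx) hQ
  have hHR : H ⊆ Metric.closedBall 0 R :=
    convexHull_min (fun x hx => by simpa using hTR x hx) (convex_closedBall _ _)
  have hHc : IsCompact H := T.finite_toSet.isCompact_convexHull ℝ
  set A : Set (Fin n → ℝ) := (WithLp.toLp 2) ⁻¹' ((fun x => (k : ℝ) • x) '' H) with hA
  have hHkc : IsCompact ((fun x => (k : ℝ) • x) '' H) := hHc.image (by fun_prop)
  have hAm : MeasurableSet A :=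
    (PiLp.volume_preserving_toLp (Fin n)).measurable hHkc.isClosed.measurableSet
  have hAv : volume A = ENNReal.ofReal ((k : ℝ) ^ n) * volume H := by
    rw [hA, (PiLp.volume_preserving_toLp (Fin n)).measure_preimage hHkc.isClosed.measurableSet.nullMeasurableSet]
    have := Measure.addHaar_smul (volume : Measure (EuclideanSpace ℝ (Fin n))) (k : ℝ) H
    rw [finrank_euclideanSpace_fin, abs_of_nonneg (by positivity)] at this
    exact this
  have hAc : Convex ℝ A := by
    have h1 : Convex ℝ ((fun x => (k : ℝ) • x) '' H) := (convex_convexHull ℝ _).smul (k : ℝ)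
    exact h1.linear_preimage ((WithLp.linearEquiv 2 ℝ (Fin n → ℝ)).symm.toLinearMap)
  have hAb : A ⊆ Set.pi univ (fun _ => Icc (-(k * R)) (k * R)) := by
    rintro y ⟨x, hx, hxy⟩ i -
    have h1 : y i = k * x i := by
      have := congrArg (fun v : EuclideanSpace ℝ (Fin n) => v i) hxy
      simpa using this.symm
    have h2 : ‖x i‖ ≤ R := (PiLp.norm_apply_le x i).trans (by simpa using hHR hx)
    rw [Real.norm_eq_abs, abs_le] at h2
    rw [h1]
    constructor <;> nlinarith
  have key := aux_key (k * R) (by positivity) n A hAm hAc hAb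
  refine le_trans ?_ (key.trans ?_)
  · set e : EuclideanSpace ℝ (Fin n) → (Fin n → ℤ) := fun x i => round ((k : ℝ) * x i) with he
    have hei : ∀ x ∈ T, ∀ i, ((e x i : ℤ) : ℝ) = k * x i := by
      intro x hx i
      obtain ⟨m, hm⟩ := hT x hx i
      simp [he, hm]
    have hinj : Set.InjOn e T := by
      intro x hx y hy hxy
      ext i
      have h1 := hei x hx i
      rw [hxy, hei y hy i] at h1
      exact (mul_left_cancel₀ hkR.ne' h1).symm
    rw [← Finset.card_image_of_injOn hinj]
    refine le_trans ?_ (ENNReal.sum_le_tsum (T.image e))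
    rw [Finset.sum_congr rfl (g := fun _ => (1 : ENNReal))]
    · simp
    · intro z hz
      obtain ⟨x, hx, rfl⟩ := Finset.mem_image.1 hz
      apply indicator_of_mem
      refine ⟨x, subset_convexHull ℝ _ hx, ?_⟩
      ext i
      simp [hei x hx i]
  · rw [hAv]
    gcongr

lemma aux_finite (n k : ℕ) (hk : 1 ≤ k) (R : ℝ) (P : Set (EuclideanSpace ℝ (Fin n)))
    (hP : ∀ x ∈ P, ‖x‖ ≤ R) : (P ∩ lpts n k).Finite := by
  have hkR : (0 : ℝ) < k := by exact_mod_cast hk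
  set e : EuclideanSpace ℝ (Fin n) → (Fin n → ℤ) := fun x i => round ((k : ℝ) * x i) with he
  have hei : ∀ x ∈ P ∩ lpts n k, ∀ i, ((e x i : ℤ) : ℝ) = k * x i := by
    intro x hx i
    obtain ⟨m, hm⟩ := hx.2 i
    simp [he, hm]
  have hinj : Set.InjOn e (P ∩ lpts n k) := by
    intro x hx y hy hxy
    ext i
    have h1 := hei x hx i
    rw [hxy, hei y hy i] at h1
    exact (mul_left_cancel₀ hkR.ne' h1).symm
  apply Set.Finite.of_finite_image _ hinj
  apply (Set.finite_Icc (fun _ : Fin n => -⌈k * R⌉) (fun _ => ⌈k * R⌉)).subset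
  rintro _ ⟨x, hx, rfl⟩
  have h : ∀ i, |(e x i : ℝ)| ≤ ⌈k * R⌉ := by
    intro i
    rw [hei x hx i, abs_mul, abs_of_pos hkR]
    refine le_trans ?_ (Int.le_ceil _)
    gcongr
    exact (PiLp.norm_apply_le x i).trans (hP x hx.1)
  constructor
  · intro i
    have := (abs_le.1 (h i)).1
    exact_mod_cast this
  · intro i
    have := (abs_le.1 (h i)).2
    exact_mod_cast this

theorem stmt1 (n : ℕ) (hn : 1 ≤ n) (K : Set (EuclideanSpace ℝ (Fin n)))
    (hKne : K.Nonempty) (hKcp : IsCompact K) (hKcv : Convex ℝ K) :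
    ∃ C : ℝ, 0 < C ∧ ∀ P : Set (EuclideanSpace ℝ (Fin n)),
      P ⊆ K → P.Nonempty → IsCompact P → Convex ℝ P →
      ∀ G : EuclideanSpace ℝ (Fin n) → ℝ, ConcaveOn ℝ P G → (∀ x ∈ P, 0 ≤ G x) →
      ∀ k : ℕ, 1 ≤ k →
        (1 / (k : ℝ) ^ n) * ∑ᶠ x ∈ P ∩ lpts n k, G x
          ≤ (∫ x in P, G x) + (C / (k : ℝ)) * sSup (G '' P) := by
  classical
  obtain ⟨R, hR⟩ := hKcp.isBounded.exists_norm_le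
  have hR0 : 0 ≤ R := by
    obtain ⟨x, hx⟩ := hKne
    exact (norm_nonneg x).trans (hR x hx)
  have hnR : (0 : ℝ) < n := by exact_mod_cast hn
  refine ⟨n * (2 * R + 1) ^ (n - 1), by positivity, ?_⟩
  intro P hPK hPne hPc hPcv G hG h0 k hk
  have hkR : (0 : ℝ) < k := by exact_mod_cast hk
  have hfin : (P ∩ lpts n k).Finite := aux_finite n k hk R P (fun x hx => hR x (hPK hx))
  rw [finsum_mem_eq_finite_toFinset_sum _ hfin]
  set S := hfin.toFinset with hS
  have hSP : ∀ x ∈ S, x ∈ P ∧ x ∈ lpts n k := fun x hx => by simpa [hS] using hx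
  have hbdd := aux_bdd P hPne hPc hPcv G hG h0
  set M := sSup (G '' P) with hM
  have hGM : ∀ x ∈ P, G x ≤ M := fun x hx => le_csSup hbdd ⟨x, hx, rfl⟩
  have hM0 : 0 ≤ M := by
    obtain ⟨x, hx⟩ := hPne
    exact (h0 x hx).trans (hGM x hx)
  set f := P.indicator G with hf
  have hf0 : ∀ x, 0 ≤ f x := fun x => indicator_nonneg h0 x
  have hlev : ∀ t, 0 < t → {x | t ≤ f x} = {x | x ∈ P ∧ t ≤ G x} := by
    intro t ht
    ext x
    by_cases hx : x ∈ P
    · simp [hf, hx]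
    · simp [hf, hx, ht]
  have hfm : AEMeasurable f volume := by
    apply NullMeasurable.aemeasurable
    have : @Measurable (NullMeasurableSpace (EuclideanSpace ℝ (Fin n)) volume) ℝ _ _ f := by
      apply measurable_of_Ici
      intro t
      change NullMeasurableSet (f ⁻¹' Ici t) volume
      rcases le_or_gt t 0 with ht | ht
      · have : f ⁻¹' Ici t = univ := by
          ext x; simp [ht.trans (hf0 x)]
        rw [this]; exact nullMeasurableSet_univ
      · have : f ⁻¹' Ici t = {x | x ∈ P ∧ t ≤ G x} := hlev t ht
        rw [this]
        exact (hG.convex_ge t).nullMeasurableSet volume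
    exact fun s hs => this hs
  have hlay := lintegral_eq_lintegral_meas_le (volume : Measure (EuclideanSpace ℝ (Fin n)))
    (Filter.Eventually.of_forall hf0) hfm
  have hPm := hPc.isClosed.measurableSet
  have hint : ∫ x in P, G x = (∫⁻ x, ENNReal.ofReal (f x)).toReal := by
    rw [← integral_indicator hPm]
    exact integral_eq_lintegral_of_nonneg_ae (Filter.Eventually.of_forall hf0) hfm.aestronglyMeasurable
  have hfinI : ∫⁻ x, ENNReal.ofReal (f x) ≠ ⊤ := by
    have : ∫⁻ x, ENNReal.ofReal (f x) ≤ ∫⁻ x, P.indicator (fun _ => ENNReal.ofReal M) x := by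
      apply lintegral_mono
      intro x
      by_cases hx : x ∈ P
      · simpa [hf, hx] using ENNReal.ofReal_le_ofReal (hGM x hx)
      · simp [hf, hx]
    refine ne_top_of_le_ne_top ?_ this
    rw [lintegral_indicator_const hPm]
    exact ENNReal.mul_ne_top ENNReal.ofReal_ne_top hPc.measure_lt_top.ne
  set c : ENNReal := n * ENNReal.ofReal (2 * (k * R) + 1) ^ (n - 1) with hc
  have hsum : ENNReal.ofReal (∑ x ∈ S, G x)
      ≤ ENNReal.ofReal ((k : ℝ) ^ n) * (∫⁻ x, ENNReal.ofReal (f x)) + c * ENNReal.ofReal M := by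
    have hone : ∀ a : ℝ, ENNReal.ofReal a = ∫⁻ t in Ioi 0, (Iic a).indicator (1 : ℝ → ENNReal) t := by
      intro a
      rw [lintegral_indicator_one measurableSet_Iic, Measure.restrict_apply measurableSet_Iic,
        Iic_inter_Ioi, Real.volume_Ioc, sub_zero]
    rw [ENNReal.ofReal_sum_of_nonneg (fun x hx => h0 x (hSP x hx).1), hlay]
    rw [Finset.sum_congr rfl (fun x _ => hone (G x)), ← lintegral_finsetSum _
      (fun x _ => measurable_one.indicator measurableSet_Iic), hone M,
      ← lintegral_const_mul' _ _ ENNReal.ofReal_ne_top,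
      ← lintegral_const_mul _ (measurable_one.indicator measurableSet_Iic),
      ← lintegral_add_right _ ((measurable_one.indicator measurableSet_Iic).const_mul _)]
    apply setLIntegral_mono' measurableSet_Ioi
    intro t ht
    have e1 : ∑ x ∈ S, (Iic (G x)).indicator (1 : ℝ → ENNReal) t
        = ((S.filter (fun x => t ≤ G x)).card : ENNReal) := by
      rw [Finset.card_filter]
      push_cast
      apply Finset.sum_congr rfl
      intro x _
      simp [Set.indicator]
    rw [e1]
    by_cases htM : t ≤ M
    · have := aux_count n k R hR0 (S.filter (fun x => t ≤ G x))
        (fun x hx => (hSP x (Finset.mem_filter.1 hx).1).2) hk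
        (fun x hx => hR x (hPK (hSP x (Finset.mem_filter.1 hx).1).1))
        {x | x ∈ P ∧ t ≤ G x} (hG.convex_ge t)
        (fun x hx => ⟨(hSP x (Finset.mem_filter.1 hx).1).1, (Finset.mem_filter.1 hx).2⟩)
      rw [hlev t ht]
      simpa [htM] using this
    · have : S.filter (fun x => t ≤ G x) = ∅ := by
        apply Finset.filter_eq_empty_iff.2
        intro x hx h
        exact htM (h.trans (hGM x (hSP x hx).1))
      simp [this]
  have hcR : c = ENNReal.ofReal (n * (2 * (k * R) + 1) ^ (n - 1)) := by
    rw [hc, ENNReal.ofReal_mul (by positivity), ENNReal.ofReal_pow (by positivity), ENNReal.ofReal_natCast]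
  have hreal : ∑ x ∈ S, G x ≤ (k : ℝ) ^ n * (∫ x in P, G x) + n * (2 * (k * R) + 1) ^ (n - 1) * M := by
    have hI0 : 0 ≤ ∫ x in P, G x := by rw [hint]; exact ENNReal.toReal_nonneg
    rw [← ENNReal.ofReal_le_ofReal_iff (by positivity)]
    refine hsum.trans_eq ?_
    rw [ENNReal.ofReal_add (by positivity) (by positivity), ENNReal.ofReal_mul (by positivity),
      ENNReal.ofReal_mul (by positivity), hcR, hint, ENNReal.ofReal_toReal hfinI]
  have hkn : (k : ℝ) ^ n = k ^ (n - 1) * k := by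
    rw [← pow_succ]; congr 1; omega
  have hk1 : (1 : ℝ) ≤ k := by exact_mod_cast hk
  have hpow : (2 * (k * R) + 1) ^ (n - 1) ≤ (k : ℝ) ^ (n - 1) * (2 * R + 1) ^ (n - 1) := by
    rw [← mul_pow]
    apply pow_le_pow_left₀ (by positivity)
    nlinarith
  rw [div_mul_eq_mul_div, one_mul, div_le_iff₀ (by positivity)]
  calc _ ≤ _ := hreal
    _ ≤ (k : ℝ) ^ n * (∫ x in P, G x) + n * ((k : ℝ) ^ (n - 1) * (2 * R + 1) ^ (n - 1)) * M := by
      gcongr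
    _ = _ := by
      rw [hkn]; field_simp
end
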